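/- Let α ∈ (0,1], a ≠ 0, let φ : [0,1]² → ℝ be continuous, and for each ε > 0 let K_ε : [0,1]² → ℝ satisfy K_ε(t,s) = ε²[a²·ts + φ(t,s)·ε^α + R_ε(t,s)] with sup_{t,s∈[0,1]} |R_ε(t,s)|/ε^α → 0 as ε → 0⁺. Then for all sufficiently small ε > 0 one has K_ε(1,1) ≠ 0, and [K_ε(t,s) − K_ε(t,1)·K_ε(1,s)/K_ε(1,1)]/ε^{2+α} converges, uniformly for (t,s) ∈ [0,1]² as ε → 0⁺, to k̄_Y(t,s) = φ(t,s) + ts·φ(1,1) − t·φ(1,s) − s·φ(t,1). -/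

import Mathlib

open MeasureTheory Filter Topology Set

/-!
Subtracting from `K` its interpolation by the profiles `u` and `v` through the base points kills
the rank-one part `A u(x) v(y)`, so for `K = A u ⊗ v + e L` this cross difference is exactly `e`
times that of `L`. The Schur complement of `K` differs from the cross difference only by a product
of two one-variable deviations, each of which is also of order `e`, divided by `K(x₀, y₀) ≈ A`.
Dividing by `e` leaves the cross difference of `L` and an error of order `e`.
-/

open Bornology

section Algebra

variable {X Y 𝕜 : Type*} [Field 𝕜]

/-- The Schur complement of the kernel `K` with respect to the entry `(x₀, y₀)`. For a covariance
function and `x₀ = y₀` it is the covariance of the process conditioned on its value at `x₀`, i.e.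
of the bridge. It equals `K` by the convention `x / 0 = 0` if `K x₀ y₀ = 0`. -/
def schurComplement (K : X → Y → 𝕜) (x₀ : X) (y₀ : Y) (x : X) (y : Y) : 𝕜 :=
  K x y - K x y₀ * K x₀ y / K x₀ y₀

/-- The cross difference of the kernel `K` along the profiles `u` and `v`, i.e. the image of `K`
under `(δ_x - u x δ_{x₀}) ⊗ (δ_y - v y δ_{y₀})`. With `u`, `v` the identity and base points `1` it
is the `k̄_Y` of the bridge limit. -/
def crossDifference (u : X → 𝕜) (v : Y → 𝕜) (K : X → Y → 𝕜) (x₀ : X) (y₀ : Y) (x : X) (y : Y) : 𝕜 :=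
  K x y + u x * v y * K x₀ y₀ - u x * K x₀ y - v y * K x y₀

lemma schurComplement_const_mul (c : 𝕜) (K : X → Y → 𝕜) (x₀ : X) (y₀ : Y) (x : X) (y : Y) :
    schurComplement (fun x y => c * K x y) x₀ y₀ x y = c * schurComplement K x₀ y₀ x y := by
  obtain rfl | hc := eq_or_ne c 0
  · simp [schurComplement]
  · simp only [schurComplement]
    rw [mul_sub, mul_assoc c (K x y₀), mul_div_mul_left _ _ hc, mul_left_comm, mul_div_assoc]

lemma schurComplement_eq_crossDifference_sub (u : X → 𝕜) (v : Y → 𝕜) {K : X → Y → 𝕜} {x₀ : X}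
    {y₀ : Y} (hK : K x₀ y₀ ≠ 0) (x : X) (y : Y) :
    schurComplement K x₀ y₀ x y = crossDifference u v K x₀ y₀ x y -
      (K x y₀ - u x * K x₀ y₀) * (K x₀ y - v y * K x₀ y₀) / K x₀ y₀ := by
  simp only [schurComplement, crossDifference]
  field_simp
  ring

lemma crossDifference_rankOne_add {u : X → 𝕜} {v : Y → 𝕜} {x₀ : X} {y₀ : Y} (hu : u x₀ = 1)
    (hv : v y₀ = 1) (A e : 𝕜) (L : X → Y → 𝕜) (x : X) (y : Y) :
    crossDifference u v (fun x y => A * (u x * v y) + e * L x y) x₀ y₀ x y =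
      e * crossDifference u v L x₀ y₀ x y := by
  simp only [crossDifference, hu, hv]
  ring

lemma schurComplement_rankOne_add_div {u : X → 𝕜} {v : Y → 𝕜} {x₀ : X} {y₀ : Y} (hu : u x₀ = 1)
    (hv : v y₀ = 1) {A e : 𝕜} {L : X → Y → 𝕜} (he : e ≠ 0) (hA : A + e * L x₀ y₀ ≠ 0)
    (x : X) (y : Y) :
    schurComplement (fun x y => A * (u x * v y) + e * L x y) x₀ y₀ x y / e =
      crossDifference u v L x₀ y₀ x y - e / (A + e * L x₀ y₀) *
        ((L x y₀ - u x * L x₀ y₀) * (L x₀ y - v y * L x₀ y₀)) := by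
  rw [schurComplement_eq_crossDifference_sub u v (by simpa [hu, hv] using hA),
    crossDifference_rankOne_add hu hv]
  simp only [hu, hv, mul_one, one_mul]
  field_simp
  ring

end Algebra

section UniformConvergence

variable {ι Z : Type*} {l : Filter ι} {s : Set Z}

lemma isBounded_image_comp_of_mapsTo {W M : Type*} [Bornology M] {f : W → M} {g : Z → W} {t : Set W}
    (hf : IsBounded (f '' t)) (hg : MapsTo g s t) : IsBounded ((fun z => f (g z)) '' s) :=
  hf.subset (image_subset_iff.2 fun _ hz => mem_image_of_mem f (hg hz))

lemma isBounded_image_const {M : Type*} [Bornology M] (s : Set Z) (c : M) :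
    IsBounded ((fun _ => c) '' s) :=
  isBounded_singleton.subset (image_subset_iff.2 fun _ _ => mem_singleton c)

lemma tendstoUniformlyOn_comp_of_mapsTo {W β : Type*} [UniformSpace β] {F : ι → W → β} {f : W → β}
    {g : Z → W} {t : Set W} (hF : TendstoUniformlyOn F f l t) (hg : MapsTo g s t) :
    TendstoUniformlyOn (fun i z => F i (g z)) (fun z => f (g z)) l s :=
  (hF.comp g).mono hg

lemma tendstoUniformlyOn_refl {β : Type*} [UniformSpace β] (f : Z → β) :
    TendstoUniformlyOn (fun _ : ι => f) f l s :=
  fun _ hU => Eventually.of_forall fun _ _ _ => refl_mem_uniformity hU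

lemma tendstoUniformlyOn_mul_of_isBounded {M : Type*} [PseudoMetricSpace M] [Zero M] [Mul M]
    [IsBoundedSMul M M] {F G : ι → Z → M} {f g : Z → M} (hF : TendstoUniformlyOn F f l s)
    (hG : TendstoUniformlyOn G g l s) (hf : IsBounded (f '' s)) (hg : IsBounded (g '' s)) :
    TendstoUniformlyOn (fun i z => F i z * G i z) (fun z => f z * g z) l s := by
  have hFG : TendstoUniformlyOn (fun i z => (F i z, G i z)) (fun z => (f z, g z)) l s :=
    fun U hU => (hF.prodMk hG U hU).diag_of_prod
  have hmem (z : Z) (hz : z ∈ s) : (f z, g z) ∈ (f '' s) ×ˢ (g '' s) :=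
    ⟨mem_image_of_mem f hz, mem_image_of_mem g hz⟩
  refine UniformContinuousOn.comp_tendstoUniformlyOn_eventually ?_
    (fun z hz => Metric.self_subset_thickening one_pos _ (hmem z hz))
    ((hf.prod hg).thickening (δ := 1)).uniformContinuousOn_smul hFG
  filter_upwards [Metric.tendstoUniformlyOn_iff.1 hFG 1 one_pos] with i hi z hz
  exact Metric.mem_thickening_iff.2 ⟨_, hmem z hz, dist_comm (f z, g z) _ ▸ hi z hz⟩

section Ring

variable {R : Type*} [NonUnitalSeminormedRing R] {f u : Z → R}

lemma tendstoUniformlyOn_mul_left_of_isBounded {F : ι → Z → R} (hu : IsBounded (u '' s))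
    (hF : TendstoUniformlyOn F f l s) :
    TendstoUniformlyOn (fun i z => u z * F i z) (fun z => u z * f z) l s := by
  have hsub : TendstoUniformlyOn (F - fun _ => f) (fun _ => 0) l s := by
    simpa only [sub_self] using! hF.sub (tendstoUniformlyOn_refl f)
  have hmul : TendstoUniformlyOn (fun i z => u z * (F i z - f z)) (fun z => u z * 0) l s :=
    tendstoUniformlyOn_mul_of_isBounded (tendstoUniformlyOn_refl u) hsub hu
      (isBounded_image_const s 0)
  have hadd := hmul.add (tendstoUniformlyOn_refl fun z => u z * f z)
  refine (hadd.congr ?_).congr_right ?_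
  · exact Eventually.of_forall fun i z _ => by simp [mul_sub]
  · exact fun z _ => by simp

lemma tendstoUniformlyOn_sub_mul_const {F : ι → Z → R} {c : ι → R} {c₀ : R}
    (hF : TendstoUniformlyOn F f l s) (hu : IsBounded (u '' s)) (hc : Tendsto c l (𝓝 c₀)) :
    TendstoUniformlyOn (fun i z => F i z - u z * c i) (fun z => f z - u z * c₀) l s :=
  hF.sub (tendstoUniformlyOn_mul_left_of_isBounded hu (hc.tendstoUniformlyOn_const s))

lemma isBounded_image_mul (hu : IsBounded (u '' s)) (hf : IsBounded (f '' s)) :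
    IsBounded ((fun z => u z * f z) '' s) :=
  (isBounded_mul hu hf).subset <| image_subset_iff.2 fun _ hz =>
    mul_mem_mul (mem_image_of_mem u hz) (mem_image_of_mem f hz)

lemma isBounded_image_sub_mul_const (hf : IsBounded (f '' s)) (hu : IsBounded (u '' s)) (c : R) :
    IsBounded ((fun z => f z - u z * c) '' s) :=
  (isBounded_sub hf (isBounded_image_mul hu (isBounded_image_const s c))).subset <|
    image_subset_iff.2 fun _ hz =>
      sub_mem_sub (mem_image_of_mem f hz) (mem_image_of_mem (fun z => u z * c) hz)

end Ring

lemma tendstoUniformlyOn_div_of_sub_mul {D : Type*} [DivisionRing D] [UniformSpace D]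
    [IsUniformAddGroup D] {F : ι → Z → D} {f : Z → D} {e : ι → D} (he : ∀ᶠ i in l, e i ≠ 0)
    (h : TendstoUniformlyOn (fun i z => (F i z - f z * e i) / e i) (fun _ => 0) l s) :
    TendstoUniformlyOn (fun i z => F i z / e i) f l s := by
  refine ((h.add (tendstoUniformlyOn_refl f)).congr ?_).congr_right fun _ _ => zero_add _
  filter_upwards [he] with i hi z _
  simp only [Pi.add_apply]
  rw [sub_div, mul_div_cancel_right₀ _ hi, sub_add_cancel]

end UniformConvergence

section ScalarLimits

lemma tendsto_add_mul_of_tendsto_zero {ι R : Type*} [NonUnitalNonAssocSemiring R]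
    [TopologicalSpace R] [IsTopologicalSemiring R] {l : Filter ι} (a : R) {e b : ι → R} {b₀ : R}
    (he : Tendsto e l (𝓝 0)) (hb : Tendsto b l (𝓝 b₀)) :
    Tendsto (fun i => a + e i * b i) l (𝓝 a) := by
  simpa only [zero_mul, add_zero] using (he.mul hb).const_add a

lemma tendsto_rpow_nhdsGT_zero {α : ℝ} (hα : 0 < α) :
    Tendsto (fun ε : ℝ => ε ^ α) (𝓝[>] 0) (𝓝[≠] 0) := by
  refine tendsto_nhdsWithin_iff.2 ⟨?_, ?_⟩
  · have hcont := (Real.continuousAt_rpow_const 0 α (Or.inr hα.le)).tendsto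
    rw [Real.zero_rpow hα.ne'] at hcont
    exact hcont.mono_left nhdsWithin_le_nhds
  · filter_upwards [self_mem_nhdsWithin] with ε hε
    exact (Real.rpow_pos_of_pos hε α).ne'

end ScalarLimits

section RankOnePerturbation

variable {ι X Y 𝕜 : Type*} [NormedField 𝕜] {l : Filter ι} {S : Set X} {T : Set Y} {x₀ : X} {y₀ : Y}
  {u : X → 𝕜} {v : Y → 𝕜} {L : ι → X → Y → 𝕜} {φ : X → Y → 𝕜}

lemma tendstoUniformlyOn_crossDifference (hx₀ : x₀ ∈ S) (hy₀ : y₀ ∈ T) (hu : IsBounded (u '' S))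
    (hv : IsBounded (v '' T))
    (hL : TendstoUniformlyOn (fun i (p : X × Y) => L i p.1 p.2) (fun p => φ p.1 p.2) l (S ×ˢ T)) :
    TendstoUniformlyOn (fun i (p : X × Y) => crossDifference u v (L i) x₀ y₀ p.1 p.2)
      (fun p => crossDifference u v φ x₀ y₀ p.1 p.2) l (S ×ˢ T) := by
  have hrow : TendstoUniformlyOn (fun i (p : X × Y) => L i x₀ p.2) (fun p => φ x₀ p.2) l (S ×ˢ T) :=
    tendstoUniformlyOn_comp_of_mapsTo hL (g := fun p : X × Y => (x₀, p.2)) fun _ hp => ⟨hx₀, hp.2⟩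
  have hcol : TendstoUniformlyOn (fun i (p : X × Y) => L i p.1 y₀) (fun p => φ p.1 y₀) l (S ×ˢ T) :=
    tendstoUniformlyOn_comp_of_mapsTo hL (g := fun p : X × Y => (p.1, y₀)) fun _ hp => ⟨hp.1, hy₀⟩
  have hcorner : Tendsto (fun i => L i x₀ y₀) l (𝓝 (φ x₀ y₀)) :=
    hL.tendsto_at (x := (x₀, y₀)) ⟨hx₀, hy₀⟩
  have hu' : IsBounded ((fun p : X × Y => u p.1) '' (S ×ˢ T)) :=
    isBounded_image_comp_of_mapsTo hu mapsTo_fst_prod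
  have hv' : IsBounded ((fun p : X × Y => v p.2) '' (S ×ˢ T)) :=
    isBounded_image_comp_of_mapsTo hv mapsTo_snd_prod
  have hsum := (hL.sub (tendstoUniformlyOn_mul_left_of_isBounded hu' hrow)).sub
    (tendstoUniformlyOn_mul_left_of_isBounded hv'
      (tendstoUniformlyOn_sub_mul_const hcol hu' hcorner))
  refine (hsum.congr ?_).congr_right ?_
  · exact Eventually.of_forall fun i p _ => by simp only [crossDifference, Pi.sub_apply]; ring
  · exact fun p _ => by simp only [crossDifference, Pi.sub_apply]; ring

lemma tendstoUniformlyOn_deviation_mul (hx₀ : x₀ ∈ S) (hy₀ : y₀ ∈ T) (hu : IsBounded (u '' S))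
    (hv : IsBounded (v '' T)) (hφx : IsBounded ((fun x => φ x y₀) '' S))
    (hφy : IsBounded ((fun y => φ x₀ y) '' T))
    (hL : TendstoUniformlyOn (fun i (p : X × Y) => L i p.1 p.2) (fun p => φ p.1 p.2) l (S ×ˢ T))
    {c : ι → 𝕜} (hc : Tendsto c l (𝓝 0)) :
    TendstoUniformlyOn
      (fun i (p : X × Y) => c i *
        ((L i p.1 y₀ - u p.1 * L i x₀ y₀) * (L i x₀ p.2 - v p.2 * L i x₀ y₀)))
      (fun _ => 0) l (S ×ˢ T) := by
  have hcorner : Tendsto (fun i => L i x₀ y₀) l (𝓝 (φ x₀ y₀)) :=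
    hL.tendsto_at (x := (x₀, y₀)) ⟨hx₀, hy₀⟩
  have hX := tendstoUniformlyOn_sub_mul_const
    (tendstoUniformlyOn_comp_of_mapsTo hL (g := fun x => (x, y₀)) fun _ hx => ⟨hx, hy₀⟩) hu hcorner
  have hY := tendstoUniformlyOn_sub_mul_const
    (tendstoUniformlyOn_comp_of_mapsTo hL (g := fun y => (x₀, y)) fun _ hy => ⟨hx₀, hy⟩) hv hcorner
  have hbX := isBounded_image_comp_of_mapsTo (isBounded_image_sub_mul_const hφx hu (φ x₀ y₀))
    (mapsTo_fst_prod (s := S) (t := T))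
  have hbY := isBounded_image_comp_of_mapsTo (isBounded_image_sub_mul_const hφy hv (φ x₀ y₀))
    (mapsTo_snd_prod (s := S) (t := T))
  have hXY := tendstoUniformlyOn_mul_of_isBounded
    (tendstoUniformlyOn_comp_of_mapsTo hX mapsTo_fst_prod)
    (tendstoUniformlyOn_comp_of_mapsTo hY mapsTo_snd_prod) hbX hbY
  simpa only [zero_mul] using tendstoUniformlyOn_mul_of_isBounded
    (hc.tendstoUniformlyOn_const (S ×ˢ T)) hXY (isBounded_image_const _ 0)
    (isBounded_image_mul hbX hbY)

theorem tendstoUniformlyOn_schurComplement_rankOne_add_div {A : 𝕜} (hA : A ≠ 0) {e : ι → 𝕜}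
    (he : Tendsto e l (𝓝[≠] 0)) (hx₀ : x₀ ∈ S) (hy₀ : y₀ ∈ T) (hux₀ : u x₀ = 1) (hvy₀ : v y₀ = 1)
    (hu : IsBounded (u '' S)) (hv : IsBounded (v '' T)) (hφx : IsBounded ((fun x => φ x y₀) '' S))
    (hφy : IsBounded ((fun y => φ x₀ y) '' T))
    (hL : TendstoUniformlyOn (fun i (p : X × Y) => L i p.1 p.2) (fun p => φ p.1 p.2) l (S ×ˢ T)) :
    TendstoUniformlyOn
      (fun i (p : X × Y) =>
        schurComplement (fun x y => A * (u x * v y) + e i * L i x y) x₀ y₀ p.1 p.2 / e i)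
      (fun p => crossDifference u v φ x₀ y₀ p.1 p.2) l (S ×ˢ T) := by
  have he₀ : Tendsto e l (𝓝 0) := he.mono_right nhdsWithin_le_nhds
  have hden : Tendsto (fun i => A + e i * L i x₀ y₀) l (𝓝 A) :=
    tendsto_add_mul_of_tendsto_zero A he₀ (hL.tendsto_at (x := (x₀, y₀)) ⟨hx₀, hy₀⟩)
  have hcoeff : Tendsto (fun i => e i / (A + e i * L i x₀ y₀)) l (𝓝 0) := by
    simpa only [zero_div] using! he₀.div hden hA
  have hmain := tendstoUniformlyOn_crossDifference hx₀ hy₀ hu hv hL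
  have herror := tendstoUniformlyOn_deviation_mul hx₀ hy₀ hu hv hφx hφy hL hcoeff
  refine ((hmain.sub herror).congr ?_).congr_right fun p _ => by simp
  filter_upwards [he.eventually self_mem_nhdsWithin, hden.eventually_ne hA] with i hei hdeni p _
  exact (schurComplement_rankOne_add_div hux₀ hvy₀ hei hdeni p.1 p.2).symm

end RankOnePerturbation

theorem bridge_covariance_refined_limit_general {X Y : Type*} {S : Set X} {T : Set Y} {x₀ : X}
    {y₀ : Y} {u : X → ℝ} {v : Y → ℝ} {φ : X → Y → ℝ} {K : ℝ → X → Y → ℝ} {α A : ℝ} (hα : 0 < α)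
    (hA : A ≠ 0) (hx₀ : x₀ ∈ S) (hy₀ : y₀ ∈ T) (hux₀ : u x₀ = 1) (hvy₀ : v y₀ = 1)
    (hu : IsBounded (u '' S)) (hv : IsBounded (v '' T)) (hφx : IsBounded ((fun x => φ x y₀) '' S))
    (hφy : IsBounded ((fun y => φ x₀ y) '' T))
    (hK : TendstoUniformlyOn
      (fun ε (p : X × Y) =>
        (K ε p.1 p.2 / ε ^ 2 - A * (u p.1 * v p.2) - φ p.1 p.2 * ε ^ α) / ε ^ α)
      (fun _ => 0) (𝓝[>] (0 : ℝ)) (S ×ˢ T)) :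
    (∀ᶠ ε in 𝓝[>] (0 : ℝ), K ε x₀ y₀ ≠ 0) ∧
    TendstoUniformlyOn
      (fun ε (p : X × Y) => schurComplement (K ε) x₀ y₀ p.1 p.2 / ε ^ (2 + α))
      (fun p => crossDifference u v φ x₀ y₀ p.1 p.2) (𝓝[>] (0 : ℝ)) (S ×ˢ T) := by
  have hrpow : Tendsto (fun ε : ℝ => ε ^ α) (𝓝[>] 0) (𝓝[≠] 0) := tendsto_rpow_nhdsGT_zero hα
  set L : ℝ → X → Y → ℝ := fun ε x y => (K ε x y / ε ^ 2 - A * (u x * v y)) / ε ^ α with hLdef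
  have hKL : ∀ᶠ ε in 𝓝[>] (0 : ℝ),
      K ε = fun x y => ε ^ 2 * (A * (u x * v y) + ε ^ α * L ε x y) := by
    filter_upwards [self_mem_nhdsWithin] with ε (hε : 0 < ε)
    have hεα : ε ^ α ≠ 0 := (Real.rpow_pos_of_pos hε α).ne'
    funext x y
    simp only [hLdef]
    field_simp
    ring
  have hL : TendstoUniformlyOn (fun ε (p : X × Y) => L ε p.1 p.2) (fun p => φ p.1 p.2)
      (𝓝[>] 0) (S ×ˢ T) :=
    tendstoUniformlyOn_div_of_sub_mul (hrpow.eventually self_mem_nhdsWithin) hK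
  constructor
  · have hcorner := tendsto_add_mul_of_tendsto_zero A (hrpow.mono_right nhdsWithin_le_nhds)
      (hL.tendsto_at (x := (x₀, y₀)) ⟨hx₀, hy₀⟩)
    filter_upwards [hKL, hcorner.eventually_ne hA, self_mem_nhdsWithin]
      with ε hKε hne (hε : 0 < ε)
    simpa [hKε, hux₀, hvy₀, hε.ne'] using hne
  · refine (tendstoUniformlyOn_schurComplement_rankOne_add_div hA hrpow hx₀ hy₀ hux₀ hvy₀ hu hv
      hφx hφy hL).congr ?_
    filter_upwards [hKL, self_mem_nhdsWithin] with ε hKε (hε : 0 < ε) p _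
    rw [hKε]
    simp only [schurComplement_const_mul]
    rw [Real.rpow_add hε, Real.rpow_two, mul_div_mul_left _ _ (by positivity)]

/-- If `K_ε(t,s) = ε²[a²·ts + φ(t,s)ε^α + R_ε(t,s)]` with `sup_{[0,1]²}|R_ε|/ε^α → 0`, then
eventually `K_ε(1,1) ≠ 0` and the bridge covariance
`K_ε(t,s) − K_ε(t,1)K_ε(1,s)/K_ε(1,1)`, rescaled by `ε^{2+α}`, converges uniformly on
`[0,1]²` to `k̄_Y(t,s) = φ(t,s) + ts·φ(1,1) − t·φ(1,s) − s·φ(t,1)`. -/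
theorem bridge_covariance_refined_limit
    (α a : ℝ) (hα : α ∈ Ioc (0:ℝ) 1) (ha : a ≠ 0)
    (φ : ℝ → ℝ → ℝ)
    (hφ : ContinuousOn (fun p : ℝ × ℝ => φ p.1 p.2) (Icc 0 1 ×ˢ Icc 0 1))
    (K : ℝ → ℝ → ℝ → ℝ)
    (hK : TendstoUniformlyOn
      (fun ε (p : ℝ × ℝ) =>
        (K ε p.1 p.2 / ε ^ 2 - a ^ 2 * (p.1 * p.2) - φ p.1 p.2 * ε ^ α) / ε ^ α)
      (fun _ => 0) (𝓝[>] (0:ℝ)) (Icc 0 1 ×ˢ Icc 0 1)) :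
    (∀ᶠ ε in 𝓝[>] (0:ℝ), K ε 1 1 ≠ 0) ∧
    TendstoUniformlyOn
      (fun ε (p : ℝ × ℝ) =>
        (K ε p.1 p.2 - K ε p.1 1 * K ε 1 p.2 / K ε 1 1) / ε ^ (2 + α))
      (fun p => φ p.1 p.2 + p.1 * p.2 * φ 1 1 - p.1 * φ 1 p.2 - p.2 * φ p.1 1)
      (𝓝[>] (0:ℝ)) (Icc 0 1 ×ˢ Icc 0 1) := by
  have hid : IsBounded (id '' Icc (0 : ℝ) 1) := by
    simpa only [image_id] using Metric.isBounded_Icc 0 1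
  have hone : (1 : ℝ) ∈ Icc (0 : ℝ) 1 := right_mem_Icc.2 zero_le_one
  have hφb := ((isCompact_Icc.prod isCompact_Icc).image_of_continuousOn hφ).isBounded
  exact bridge_covariance_refined_limit_general hα.1 (pow_ne_zero 2 ha) hone hone rfl rfl hid hid
    (isBounded_image_comp_of_mapsTo hφb (g := fun t => (t, 1)) fun _ ht => ⟨ht, hone⟩)
    (isBounded_image_comp_of_mapsTo hφb (g := fun s => (1, s)) fun _ hs => ⟨hone, hs⟩) hK
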